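/- Let A be a C*-algebra and let I₁ ⊆ J₁ and I₂ ⊆ J₂ be closed two-sided ideals of A such that the corresponding locally closed subsets of Prim(A) coincide: U_{J₁} \ U_{I₁} = U_{J₂} \ U_{I₂}. Then J₁ + J₂ = J₁ + I₂ and I₁ = (I₁ + I₂) ∩ J₁; consequently, the inclusion J₁ ↪ J₁ + J₂ induces an isomorphism J₁/I₁ ≅ (J₁ + J₂)/(I₁ + I₂). -/

import Mathlib

open scoped Pointwise

universe u

/-- A subset of a C*-algebra is a closed two-sided ideal. -/
def IsClosedTwoSidedIdeal {A : Type u} [NonUnitalCStarAlgebra A] (S : Set A) : Prop :=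
  IsClosed S ∧ (0 : A) ∈ S ∧ (∀ x ∈ S, ∀ y ∈ S, x + y ∈ S) ∧ (∀ x ∈ S, -x ∈ S) ∧
    (∀ a : A, ∀ x ∈ S, a * x ∈ S ∧ x * a ∈ S)

/-- A witness that `P` is a primitive ideal: `P` is the kernel of a non-zero
topologically irreducible *-representation of `A` on a Hilbert space. -/
structure PrimitiveWitness (A : Type u) [NonUnitalCStarAlgebra A] (P : Set A) where
  H : Type u
  [instN : NormedAddCommGroup H]
  [instI : InnerProductSpace ℂ H]
  [instC : CompleteSpace H]
  π : A →⋆ₙₐ[ℂ] (H →L[ℂ] H)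
  nonzero : ∃ a : A, π a ≠ 0
  irreducible : ∀ S : Submodule ℂ H, IsClosed (S : Set H) →
    (∀ a : A, ∀ x ∈ S, π a x ∈ S) → S = ⊥ ∨ S = ⊤
  ker_eq : P = {a : A | π a = 0}

/-- `P` is a primitive ideal of `A`. -/
def IsPrimitiveIdeal (A : Type u) [NonUnitalCStarAlgebra A] (P : Set A) : Prop :=
  Nonempty (PrimitiveWitness A P)


/-- Approximate units, one element at a time, for closed ideals. -/
theorem csi_local_unit {A : Type u} [NonUnitalCStarAlgebra A] {J : Set A}
    (hJ : IsClosedTwoSidedIdeal J) {x : A} (hx : x ∈ J) {ε : ℝ} (hε : 0 < ε) :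
    ∃ e ∈ J, IsSelfAdjoint e ∧ ‖e‖ ≤ 1 ∧ ‖x - x * e‖ ≤ ε := by
  let : PartialOrder A := CStarAlgebra.spectralOrder A
  have : StarOrderedRing A := CStarAlgebra.spectralOrderedRing A
  set a : A := star x * x with ha
  have ha0 : 0 ≤ a := star_mul_self_nonneg x
  have hsa : IsSelfAdjoint a := IsSelfAdjoint.star_mul_self x
  have haJ : a ∈ J := (hJ.2.2.2.2 (star x) x hx).1
  set d : ℝ := ε ^ 2 with hd
  have hd0 : 0 < d := by positivity
  have hpos : ∀ t : ℝ, t ^ 2 + d ^ 2 ≠ 0 := fun t => by positivity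
  set g : ℝ → ℝ := fun t => t / (t ^ 2 + d ^ 2) with hg
  set f : ℝ → ℝ := fun t => t * g t with hf
  have hgc : Continuous g := by
    rw [hg]; exact continuous_id.div (by fun_prop) hpos
  have hfc : Continuous f := by rw [hf]; fun_prop
  have hg0 : g 0 = 0 := by simp [hg]
  have hf0 : f 0 = 0 := by simp [hf]
  have hid : cfcₙ (fun t : ℝ => t) a = a := cfcₙ_id' ℝ a
  set e : A := cfcₙ f a with he
  have heq : e = a * cfcₙ g a := by
    rw [he, hf, cfcₙ_mul (fun t => t) g a (by fun_prop) rfl (hgc.continuousOn) hg0, hid]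
  have hesa : IsSelfAdjoint e := cfcₙ_predicate f a
  have hb : ∀ t : ℝ, 0 ≤ f t ∧ f t ≤ 1 := by
    intro t
    have h1 : f t = t ^ 2 / (t ^ 2 + d ^ 2) := by simp only [hf, hg]; ring
    rw [h1]
    exact ⟨by positivity, by rw [div_le_one (by positivity)]; nlinarith [sq_nonneg d]⟩
  refine ⟨e, ?_, hesa, ?_, ?_⟩
  · rw [heq]; exact (hJ.2.2.2.2 _ a haJ).2
  · refine norm_cfcₙ_le fun t _ => ?_
    rw [Real.norm_of_nonneg (hb t).1]; exact (hb t).2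
  · have h1 : star (x - x * e) * (x - x * e) = (a - a * e) - (e * a - e * a * e) := by
      rw [star_sub, star_mul, hesa.star_eq, ha]
      noncomm_ring
    have hae : cfcₙ (fun t => t * f t) a = a * e := by
      rw [cfcₙ_mul (fun t => t) f a (by fun_prop) rfl hfc.continuousOn hf0, hid]
    have hea : cfcₙ (fun t => f t * t) a = e * a := by
      rw [cfcₙ_mul f (fun t => t) a hfc.continuousOn hf0 (by fun_prop) rfl, hid]
    have heae : cfcₙ (fun t => f t * t * f t) a = e * a * e := by
      rw [cfcₙ_mul (fun t => f t * t) f a (by fun_prop) (by simp) hfc.continuousOn hf0, hea]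
    have h2 : (a - a * e) - (e * a - e * a * e)
        = cfcₙ (fun t => (t - t * f t) - (f t * t - f t * t * f t)) a := by
      rw [cfcₙ_sub (fun t => t - t * f t) (fun t => f t * t - f t * t * f t) a
          (by fun_prop) (by simp) (by fun_prop) (by simp),
        cfcₙ_sub (fun t => t) (fun t => t * f t) a
          (by fun_prop) (by simp) (by fun_prop) (by simp),
        cfcₙ_sub (fun t => f t * t) (fun t => f t * t * f t) a
          (by fun_prop) (by simp) (by fun_prop) (by simp), hae, hea, heae, hid]
    have h3 : ‖star (x - x * e) * (x - x * e)‖ ≤ d := by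
      rw [h1, h2]
      refine norm_cfcₙ_le fun t ht => ?_
      have ht0 : 0 ≤ t := quasispectrum_nonneg_of_nonneg a ha0 t ht
      have h4 : (t - t * f t) - (f t * t - f t * t * f t) = (t * (1 - f t)) * (1 - f t) := by ring
      have h5 : t * (1 - f t) ≤ d := by
        have : t * (1 - f t) = t * d ^ 2 / (t ^ 2 + d ^ 2) := by
          simp only [hf, hg]; have := hpos t; field_simp; ring
        rw [this, div_le_iff₀ (by positivity)]
        nlinarith [mul_nonneg hd0.le (sq_nonneg (t - d)), mul_nonneg ht0 (sq_nonneg d),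
          mul_pos hd0 (mul_pos hd0 hd0), mul_nonneg hd0.le (sq_nonneg (t - d/2))]
      have h6 := hb t
      have h7 : 0 ≤ t * (1 - f t) := mul_nonneg ht0 (by linarith)
      rw [h4, Real.norm_of_nonneg (mul_nonneg h7 (by linarith))]
      nlinarith
    rw [CStarRing.norm_star_mul_self] at h3
    rw [hd] at h3
    nlinarith [norm_nonneg (x - x * e)]

theorem csi_mem_of_approx {A : Type u} [NonUnitalCStarAlgebra A] {J : Set A}
    (hJ : IsClosedTwoSidedIdeal J) {x : A} (h : ∀ ε > (0 : ℝ), ∃ y ∈ J, ‖x - y‖ ≤ ε) :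
    x ∈ J := by
  rw [← hJ.1.closure_eq, Metric.mem_closure_iff]
  intro ε hε
  obtain ⟨y, hy, hxy⟩ := h (ε / 2) (by linarith)
  exact ⟨y, hy, by rw [dist_eq_norm]; linarith⟩

theorem csi_star_mem {A : Type u} [NonUnitalCStarAlgebra A] {J : Set A}
    (hJ : IsClosedTwoSidedIdeal J) {x : A} (hx : x ∈ J) : star x ∈ J := by
  refine csi_mem_of_approx hJ fun ε hε => ?_
  obtain ⟨e, heJ, hes, -, he⟩ := csi_local_unit hJ hx hε
  refine ⟨e * star x, (hJ.2.2.2.2 _ e heJ).2, ?_⟩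
  have : star x - e * star x = star (x - x * e) := by
    rw [star_sub, star_mul, hes.star_eq]
  rwa [this, norm_star]

theorem csi_smul_mem {A : Type u} [NonUnitalCStarAlgebra A] {J : Set A}
    (hJ : IsClosedTwoSidedIdeal J) (c : ℂ) {x : A} (hx : x ∈ J) : c • x ∈ J := by
  refine csi_mem_of_approx hJ fun ε hε => ?_
  obtain ⟨e, heJ, hes, -, he⟩ := csi_local_unit hJ hx (ε := ε / (‖c‖ + 1)) (by positivity)
  refine ⟨x * (c • e), (hJ.2.2.2.2 _ x hx).2, ?_⟩
  rw [mul_smul_comm, ← smul_sub, norm_smul]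
  rw [le_div_iff₀ (by positivity)] at he
  nlinarith [norm_nonneg (x - x * e), norm_nonneg c]

/-- A sum of two closed ideals is closed. -/
theorem csi_sum_closed {A : Type u} [NonUnitalCStarAlgebra A] {I J : Set A}
    (hI : IsClosedTwoSidedIdeal I) (hJ : IsClosedTwoSidedIdeal J) : IsClosed (I + J) := by
  let I' : AddSubgroup A :=
    { carrier := I, add_mem' := fun h k => hI.2.2.1 _ h _ k, zero_mem' := hI.2.1,
      neg_mem' := fun h => hI.2.2.2.1 _ h }
  let J' : AddSubgroup A :=
    { carrier := J, add_mem' := fun h k => hJ.2.2.1 _ h _ k, zero_mem' := hJ.2.1,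
      neg_mem' := fun h => hJ.2.2.2.1 _ h }
  have : CompleteSpace I' := (show IsClosed (I' : Set A) from hI.1).completeSpace_coe
  have : CompleteSpace J' := (show IsClosed (J' : Set A) from hJ.1).completeSpace_coe
  let f : NormedAddGroupHom (I' × J') A :=
    { toFun := fun p => (p.1 : A) + (p.2 : A)
      map_add' := fun p q => by simp; abel
      bound' := ⟨2, fun p => by
        have h1 : ‖(p.1 : A)‖ ≤ ‖p‖ := norm_fst_le p
        have h2 : ‖(p.2 : A)‖ ≤ ‖p‖ := norm_snd_le p
        have := norm_add_le (p.1 : A) (p.2 : A)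
        linarith⟩ }
  have hK : ((I' ⊔ J' : AddSubgroup A) : Set A) = I + J := by
    rw [AddSubgroup.add_normal]
    rfl
  have hyp : f.SurjectiveOnWith (I' ⊔ J') 3 := by
    intro z hz
    obtain ⟨i, hi, j, hj, rfl⟩ := AddSubgroup.mem_sup.1 hz
    by_cases h0 : i + j = 0
    · exact ⟨0, by rw [map_zero, h0], by simp [h0]⟩
    have hpos : 0 < ‖i + j‖ := norm_pos_iff.2 h0
    obtain ⟨e, heJ, -, he1, he⟩ := csi_local_unit hJ hj hpos
    have hk : i * e ∈ J := (hJ.2.2.2.2 i e heJ).1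
    have hk' : i * e ∈ I := (hI.2.2.2.2 e i hi).2
    refine ⟨(⟨i - i * e, I'.sub_mem hi hk'⟩, ⟨j + i * e, J'.add_mem hj hk⟩), ?_, ?_⟩
    · change (i - i * e) + (j + i * e) = i + j
      abel
    · have h1 : ‖j + i * e‖ ≤ 2 * ‖i + j‖ := by
        have : j + i * e = (j - j * e) + (i + j) * e := by noncomm_ring
        rw [this]
        have h2 : ‖(i + j) * e‖ ≤ ‖i + j‖ * 1 :=
          (norm_mul_le _ _).trans (by gcongr)
        have := norm_add_le (j - j * e) ((i + j) * e)
        linarith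
      have h2 : ‖i - i * e‖ ≤ 3 * ‖i + j‖ := by
        have : i - i * e = (i + j) - (j + i * e) := by abel
        rw [this]
        have := norm_sub_le (i + j) (j + i * e)
        linarith
      exact max_le h2 (by change ‖j + i * e‖ ≤ _; linarith)
  have := controlled_closure_of_complete (by norm_num) one_pos hyp
  rw [← hK]
  refine isClosed_of_closure_subset fun z hz => ?_
  obtain ⟨p, hp, -⟩ := this z hz
  rw [← hp]
  exact AddSubgroup.add_mem_sup p.1.2 p.2.2

open scoped ComplexOrder in
/-- The states of a unital C*-algebra vanishing on `I`. -/
def csiStates {B : Type u} [CStarAlgebra B] (I : Set B) : Set (B → ℂ) :=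
  {φ | (∀ x y, φ (x + y) = φ x + φ y) ∧ (∀ (c : ℂ) x, φ (c • x) = c * φ x) ∧
    (∀ x, 0 ≤ φ (star x * x)) ∧ φ 1 = 1 ∧ ∀ i ∈ I, φ i = 0}

open scoped ComplexOrder in
/-- The positive linear map associated with a state. -/
noncomputable def csiPos {B : Type u} [CStarAlgebra B] [PartialOrder B] [StarOrderedRing B]
    {I : Set B} {φ : B → ℂ} (h : φ ∈ csiStates I) : B →ₚ[ℂ] ℂ :=
  PositiveLinearMap.mk₀
    { toFun := φ, map_add' := h.1, map_smul' := h.2.1 } (fun x hx => by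
      obtain ⟨y, rfl⟩ := CStarAlgebra.nonneg_iff_eq_star_mul_self.1 hx
      exact h.2.2.1 y)

open scoped ComplexOrder in
theorem csiPos_apply {B : Type u} [CStarAlgebra B] [PartialOrder B] [StarOrderedRing B]
    {I : Set B} {φ : B → ℂ} (h : φ ∈ csiStates I) (x : B) : csiPos h x = φ x := rfl

open scoped ComplexOrder in
theorem csi_bound {B : Type u} [CStarAlgebra B] {I : Set B} (x : B) :
    ∃ r : ℝ, ∀ φ ∈ csiStates I, ‖φ x‖ ≤ r := by
  let _ : PartialOrder B := CStarAlgebra.spectralOrder B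
  have : StarOrderedRing B := CStarAlgebra.spectralOrderedRing B
  have key : x ∈ Submodule.span ℂ {a : B | 0 ≤ a} := by
    rw [CStarAlgebra.span_nonneg]; trivial
  induction key using Submodule.span_induction with
  | mem y hy =>
    refine ⟨‖y‖, fun φ hφ => ?_⟩
    have := (csiPos hφ).norm_apply_le_of_nonneg y hy
    simpa [csiPos_apply, hφ.2.2.2.1] using this
  | zero =>
    refine ⟨0, fun φ hφ => ?_⟩
    rw [← csiPos_apply hφ, map_zero, norm_zero]
  | add y z _ _ hy hz =>
    obtain ⟨r, hr⟩ := hy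
    obtain ⟨s, hs⟩ := hz
    refine ⟨r + s, fun φ hφ => ?_⟩
    rw [hφ.1]
    exact (norm_add_le _ _).trans (add_le_add (hr φ hφ) (hs φ hφ))
  | smul c y _ hy =>
    obtain ⟨r, hr⟩ := hy
    refine ⟨‖c‖ * r, fun φ hφ => ?_⟩
    rw [hφ.2.1, norm_mul]
    gcongr
    exact hr φ hφ

open scoped ComplexOrder in
theorem csi_compact {B : Type u} [CStarAlgebra B] (I : Set B) : IsCompact (csiStates I) := by
  choose r hr using fun x : B => csi_bound (I := I) x
  refine (isCompact_univ_pi fun x : B => isCompact_closedBall (0 : ℂ) (r x)).of_isClosed_subset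
    ?_ fun φ hφ x _ => by simpa using hr x φ hφ
  simp only [csiStates, Set.ofPred_and, Set.ofPred_forall]
  refine IsClosed.inter (isClosed_iInter fun x => isClosed_iInter fun y => ?_)
    (IsClosed.inter (isClosed_iInter fun c => isClosed_iInter fun y => ?_)
    (IsClosed.inter (isClosed_iInter fun x => ?_) (IsClosed.inter ?_
    (isClosed_iInter fun x => isClosed_iInter fun _ => ?_))))
  · exact isClosed_eq (by fun_prop) (by fun_prop)
  · exact isClosed_eq (by fun_prop) (by fun_prop)
  · exact isClosed_le (by fun_prop) (by fun_prop)
  · exact isClosed_eq (by fun_prop) (by fun_prop)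
  · exact isClosed_eq (by fun_prop) (by fun_prop)

/-- Separation: the key convexity statement. -/
theorem csi_not_mem_closure {B : Type u} [CStarAlgebra B] [PartialOrder B] [StarOrderedRing B]
    {I : Set B} (hI : IsClosedTwoSidedIdeal I) {a : B} (ha : a ∉ I) :
    -(star a * a) ∉ closure ({p : B | 0 ≤ p} + I) := by
  intro hmem
  apply ha
  refine csi_mem_of_approx hI fun ε hε => ?_
  obtain ⟨y, ⟨p, hp, i, hi, rfl⟩, hy⟩ := Metric.mem_closure_iff.1 hmem (ε ^ 2 / 8) (by positivity)
  obtain ⟨e, heI, hes, he1, he⟩ := csi_local_unit hI hi (ε := ε ^ 2 / 8) (by positivity)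
  refine ⟨a * e, (hI.2.2.2.2 a e heI).1, ?_⟩
  rw [dist_eq_norm] at hy
  set u : B := 1 - e with hu
  have hus : star u = u := by rw [hu, star_sub, star_one, hes.star_eq]
  have hun : ‖u‖ ≤ 2 := by
    have h1 : ‖(1 : B)‖ ≤ 1 := by
      rcases subsingleton_or_nontrivial B with h | h
      · rw [Subsingleton.elim (1 : B) 0]; simp
      · rw [norm_one]
    have := norm_sub_le (1 : B) e
    rw [hu]; linarith
  have h1 : star (a * u) * (a * u) = u * (star a * a) * u := by
    rw [star_mul, hus]; noncomm_ring
  have h2 : a - a * e = a * u := by rw [hu]; noncomm_ring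
  have h3 : 0 ≤ u * p * u := by
    have := star_left_conjugate_nonneg hp u
    rwa [hus] at this
  have h4 : ‖u * (star a * a) * u‖ ≤ ‖u * (star a * a) * u + u * p * u‖ := by
    refine CStarAlgebra.norm_le_norm_of_nonneg_of_le ?_ (le_add_of_nonneg_right h3)
    rw [← h1]; exact star_mul_self_nonneg _
  have h5 : u * (star a * a) * u + u * p * u
      = -(u * (-(star a * a) - (p + i)) * u) - u * (i - i * e) := by
    rw [hu]; noncomm_ring
  have h6 : ‖u * (-(star a * a) - (p + i)) * u‖ ≤ 2 * (ε ^ 2 / 8) * 2 := by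
    refine (norm_mul_le _ _).trans ?_
    gcongr
    refine (norm_mul_le _ _).trans ?_
    gcongr
  have h7 : ‖u * (i - i * e)‖ ≤ 2 * (ε ^ 2 / 8) := by
    refine (norm_mul_le _ _).trans ?_
    gcongr
  have h8 : ‖star (a * u) * (a * u)‖ ≤ ε ^ 2 := by
    rw [h1]
    refine h4.trans ?_
    rw [h5]
    refine (norm_sub_le _ _).trans ?_
    rw [norm_neg]
    linarith [sq_nonneg ε]
  rw [h2]
  rw [CStarRing.norm_star_mul_self] at h8
  nlinarith [norm_nonneg (a * u)]

open scoped ComplexOrder ComplexStarModule in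
theorem csi_exists_state {B : Type u} [CStarAlgebra B]
    {I : Set B} (hI : IsClosedTwoSidedIdeal I) {a : B} (ha : a ∉ I) :
    ∃ φ ∈ csiStates I, φ (star a * a) ≠ 0 := by
  let _ : PartialOrder B := CStarAlgebra.spectralOrder B
  have : StarOrderedRing B := CStarAlgebra.spectralOrderedRing B
  have hrs : ∀ (c : ℝ) {i : B}, i ∈ I → c • i ∈ I := fun c i hi => by
    have := csi_smul_mem hI (c : ℂ) hi
    rwa [Complex.coe_smul] at this
  have hconv : Convex ℝ ({p : B | 0 ≤ p} + I) := by
    refine Convex.add ?_ ?_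
    · intro x hx y hy s t hs ht _
      have hx' : 0 ≤ x := hx
      have hy' : 0 ≤ y := hy
      exact add_nonneg (smul_nonneg hs hx') (smul_nonneg ht hy')
    · intro x hx y hy s t hs ht _
      exact hI.2.2.1 _ (hrs s hx) _ (hrs t hy)
  obtain ⟨f, v, hfv, hf⟩ := geometric_hahn_banach_point_closed hconv.closure isClosed_closure
    (csi_not_mem_closure hI ha)
  have hmem : ∀ p : B, 0 ≤ p → ∀ i ∈ I, v < f (p + i) := fun p hp i hi =>
    hf _ (subset_closure ⟨p, hp, i, hi, rfl⟩)
  have hv0 : v < 0 := by simpa using hmem 0 le_rfl 0 hI.2.1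
  have hcone : ∀ y : B, (∀ t : ℝ, 0 ≤ t → v < f (t • y)) → 0 ≤ f y := by
    intro y hy
    by_contra hneg
    push Not at hneg
    have := hy (v / f y) (div_nonneg_of_nonpos hv0.le hneg.le)
    rw [map_smul, smul_eq_mul, div_mul_cancel₀ _ hneg.ne] at this
    exact lt_irrefl _ this
  have hfpos : ∀ p : B, 0 ≤ p → 0 ≤ f p := fun p hp => hcone p fun t ht => by
    simpa using hmem (t • p) (smul_nonneg ht hp) 0 hI.2.1
  have hfI' : ∀ i ∈ I, 0 ≤ f i := fun i hi => hcone i fun t ht => by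
    simpa using hmem 0 le_rfl (t • i) (hrs t hi)
  have hfI : ∀ i ∈ I, f i = 0 := fun i hi => by
    refine le_antisymm ?_ (hfI' i hi)
    have := hfI' (-i) (hI.2.2.2.1 i hi)
    rw [map_neg] at this; linarith
  have hfa : 0 < f (star a * a) := by
    rw [map_neg] at hfv; linarith
  have hf1 : 0 < f 1 := by
    have h1 : star a * a ≤ algebraMap ℝ B (‖a‖ ^ 2) := CStarAlgebra.star_mul_le_algebraMap_norm_sq
    have h2 := hfpos _ (sub_nonneg.2 h1)
    rw [map_sub, Algebra.algebraMap_eq_smul_one, map_smul, smul_eq_mul] at h2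
    by_contra hneg
    push Not at hneg
    nlinarith [sq_nonneg ‖a‖]
  let ψ : B → ℂ := fun x => (f (ℜ x : B) : ℂ) + Complex.I * (f (ℑ x : B) : ℂ)
  have hsa : ∀ x : B, IsSelfAdjoint x → ψ x = f x := by
    intro x hx
    simp [ψ, hx.coe_realPart, hx.imaginaryPart]
  have hψa : ∀ x y, ψ (x + y) = ψ x + ψ y := by
    intro x y
    simp [ψ]; ring
  have hψI : ∀ x, ψ (Complex.I • x) = Complex.I * ψ x := by
    intro x
    simp only [ψ, realPart_I_smul, imaginaryPart_I_smul]
    simp [mul_add, ← mul_assoc]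
    ring
  have hψr : ∀ (r : ℝ) x, ψ (r • x) = r * ψ x := by
    intro r x
    simp [ψ]; ring
  have hψs : ∀ (c : ℂ) x, ψ (c • x) = c * ψ x := by
    intro c x
    have : c • x = (c.re : ℝ) • x + (c.im : ℝ) • (Complex.I • x) := by
      conv_lhs => rw [← Complex.re_add_im c]
      rw [add_smul, mul_smul, Complex.coe_smul, Complex.coe_smul]
    rw [this, hψa, hψr, hψr, hψI]
    conv_rhs => rw [← Complex.re_add_im c]
    ring
  have hf1' : (f 1 : ℂ) ≠ 0 := by exact_mod_cast hf1.ne'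
  refine ⟨fun x => ψ x / (f 1 : ℂ), ⟨?_, ?_, ?_, ?_, ?_⟩, ?_⟩
  · intro x y; simp only [hψa, add_div]
  · intro c x; simp only [hψs, mul_div_assoc]
  · intro x
    simp only [hsa _ (IsSelfAdjoint.star_mul_self x)]
    have : 0 ≤ f (star x * x) / f 1 := div_nonneg (hfpos _ (star_mul_self_nonneg x)) hf1.le
    exact_mod_cast this
  · simp only [hsa _ (IsSelfAdjoint.one B)]
    exact div_self hf1'
  · intro i hi
    have h1 : (ℜ i : B) ∈ I := by
      rw [realPart_apply_coe]
      exact hrs _ (hI.2.2.1 _ hi _ (csi_star_mem hI hi))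
    have h2 : (ℑ i : B) ∈ I := by
      rw [imaginaryPart_apply_coe]
      refine csi_smul_mem hI _ (hrs _ ?_)
      rw [sub_eq_add_neg]
      exact hI.2.2.1 _ hi _ (hI.2.2.2.1 _ (csi_star_mem hI hi))
    simp [ψ, hfI _ h1, hfI _ h2]
  · simp only [hsa _ (IsSelfAdjoint.star_mul_self a)]
    exact div_ne_zero (by exact_mod_cast hfa.ne') hf1'

open scoped ComplexOrder in
/-- Krein–Milman: an extreme state not vanishing at `a* a`. -/
theorem csi_exists_extreme {B : Type u} [CStarAlgebra B]
    {I : Set B} (hI : IsClosedTwoSidedIdeal I) {a : B} (ha : a ∉ I) :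
    ∃ φ ∈ (csiStates I).extremePoints ℝ, φ (star a * a) ≠ 0 := by
  obtain ⟨φ₀, hφ₀, hne⟩ := csi_exists_state hI ha
  let l : (B → ℂ) →L[ℝ] ℝ := Complex.reCLM.comp (ContinuousLinearMap.proj (star a * a))
  have hl : ∀ φ, l φ = (φ (star a * a)).re := fun _ => rfl
  obtain ⟨z, hz, hmax⟩ := (csi_compact I).exists_isMaxOn ⟨φ₀, hφ₀⟩ l.continuous.continuousOn
  have hexp : IsExposed ℝ (csiStates I) {z ∈ csiStates I | ∀ w ∈ csiStates I, l w ≤ l z} :=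
    fun _ => ⟨l, rfl⟩
  obtain ⟨φ, hφ⟩ := (hexp.isCompact (csi_compact I)).extremePoints_nonempty ⟨z, hz, hmax⟩
  refine ⟨φ, hexp.isExtreme.extremePoints_subset_extremePoints hφ, fun h0 => ?_⟩
  have h1 := hφ.1.2 φ₀ hφ₀
  rw [hl, hl, h0] at h1
  have h2 := hφ₀.2.2.1 a
  have h3 := Complex.le_def.1 h2
  apply hne
  apply Complex.ext
  · exact le_antisymm h1 h3.1
  · exact h3.2.symm

open scoped ComplexOrder InnerProductSpace in
/-- The GNS representation with its cyclic vector. -/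
theorem csi_gns {B : Type u} [CStarAlgebra B] {I : Set B} {φ : B → ℂ} (hφ : φ ∈ csiStates I) :
    ∃ (H : Type u) (_ : NormedAddCommGroup H) (_ : InnerProductSpace ℂ H) (_ : CompleteSpace H)
      (π : B →⋆ₐ[ℂ] (H →L[ℂ] H)) (ξ : H),
      (∀ b, ⟪ξ, π b ξ⟫_ℂ = φ b) ∧ Dense (Set.range fun b => π b ξ) := by
  let _ : PartialOrder B := CStarAlgebra.spectralOrder B
  have : StarOrderedRing B := CStarAlgebra.spectralOrderedRing B
  let f := csiPos hφ
  have hπ : ∀ b : B, f.gnsStarAlgHom b ((f.toPreGNS 1 : f.PreGNS) : f.GNS)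
      = ((f.toPreGNS b : f.PreGNS) : f.GNS) := by
    intro b
    have := f.gnsNonUnitalStarAlgHom_apply_coe (a := b) (b := f.toPreGNS 1)
    rw [f.leftMulMapPreGNS_apply] at this
    simpa using this
  refine ⟨f.GNS, inferInstance, inferInstance, inferInstance, f.gnsStarAlgHom,
    ((f.toPreGNS 1 : f.PreGNS) : f.GNS), ?_, ?_⟩
  · intro b
    rw [hπ, UniformSpace.Completion.inner_coe, f.preGNS_inner_def]
    simp [f, csiPos_apply]
  · have h : (fun b : B => f.gnsStarAlgHom b ((f.toPreGNS 1 : f.PreGNS) : f.GNS))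
        = (fun x : f.PreGNS => (x : f.GNS)) ∘ f.toPreGNS := funext hπ
    rw [h, Set.range_comp, f.toPreGNS.surjective.range_eq, Set.image_univ]
    exact UniformSpace.Completion.denseRange_coe

open scoped ComplexOrder InnerProductSpace in
theorem csi_primitive {B : Type u} [CStarAlgebra B]
    {I : Set B} (hI : IsClosedTwoSidedIdeal I) {a : B} (ha : a ∉ I) :
    ∃ (H : Type u) (_ : NormedAddCommGroup H) (_ : InnerProductSpace ℂ H) (_ : CompleteSpace H)
      (π : B →⋆ₐ[ℂ] (H →L[ℂ] H)), (∀ i ∈ I, π i = 0) ∧ π a ≠ 0 ∧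
      ∀ K : Submodule ℂ H, IsClosed (K : Set H) → (∀ b : B, ∀ x ∈ K, π b x ∈ K) →
        K = ⊥ ∨ K = ⊤ := by
  obtain ⟨φ, hφ, hne⟩ := csi_exists_extreme hI ha
  obtain ⟨H, i1, i2, i3, π, ξ, hξ, hd⟩ := csi_gns hφ.1
  have hadj : ∀ b (x y : H), ⟪π b x, y⟫_ℂ = ⟪x, π (star b) y⟫_ℂ := by
    intro b x y
    rw [map_star, ContinuousLinearMap.star_eq_adjoint, ContinuousLinearMap.adjoint_inner_right]
  have hmul : ∀ b c (x : H), π b (π c x) = π (b * c) x := by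
    intro b c x; rw [map_mul]; rfl
  have hz : ∀ x : H, (∀ b, ⟪x, π b ξ⟫_ℂ = 0) → x = 0 := by
    intro x hx
    have h : (fun y => ⟪x, y⟫_ℂ) = fun _ => (0 : ℂ) := by
      refine Continuous.ext_on hd (by fun_prop) continuous_const ?_
      rintro _ ⟨b, rfl⟩
      exact hx b
    exact inner_self_eq_zero.1 (congrFun h x)
  have hop : ∀ S T : H →L[ℂ] H, (∀ b, S (π b ξ) = T (π b ξ)) → S = T := by
    intro S T h
    ext x
    refine congrFun (Continuous.ext_on hd S.continuous T.continuous ?_) x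
    rintro _ ⟨b, rfl⟩
    exact h b
  have hπI : ∀ i ∈ I, π i = 0 := by
    intro i hi
    refine hop _ _ fun b => hz _ fun c => ?_
    rw [hmul, hadj, hmul, hξ]
    refine hφ.1.2.2.2.2 _ ((hI.2.2.2.2 _ _ ?_).2)
    exact csi_star_mem hI (hI.2.2.2.2 b i hi).2
  have hξ1 : ⟪ξ, ξ⟫_ℂ = 1 := by
    have := hξ 1
    rw [map_one] at this
    rw [← hφ.1.2.2.2.1, ← this]; rfl
  refine ⟨H, i1, i2, i3, π, hπI, ?_, ?_⟩
  · intro h0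
    apply hne
    rw [← hξ, map_mul, h0, mul_zero]
    simp
  intro K hK hinv
  have : CompleteSpace K := hK.completeSpace_coe
  set p : H →L[ℂ] H := K.starProjection with hp
  have hpp : ∀ x, p (p x) = p x := fun x =>
    Submodule.starProjection_eq_self_iff.2 (Submodule.starProjection_apply_mem K x)
  have hps : ∀ x y, ⟪p x, y⟫_ℂ = ⟪x, p y⟫_ℂ := fun x y =>
    Submodule.inner_starProjection_left_eq_right K x y
  have hpc : ∀ b x, p (π b x) = π b (p x) := by
    intro b x
    refine Submodule.eq_starProjection_of_mem_orthogonal (K := K) (u := π b x)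
      (hinv b _ (Submodule.starProjection_apply_mem K x)) ?_
    rw [← map_sub]
    intro y hy
    have h1 := hinv (star b) y hy
    rw [← star_star b, ← hadj]
    exact (Submodule.sub_starProjection_mem_orthogonal x) _ h1
  -- the vector functionals
  have hpξ : ∀ b, ⟪p ξ, π b (p ξ)⟫_ℂ = ⟪p ξ, π b ξ⟫_ℂ := by
    intro b
    rw [← hpc, ← hps, hpp]
  set t : ℝ := ‖p ξ‖ ^ 2 with ht
  have htξ : ⟪p ξ, ξ⟫_ℂ = (t : ℂ) := by
    rw [← hpp, hps, inner_self_eq_norm_sq_to_K, ht]; simp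
  set q : H := ξ - p ξ with hq
  have hpq : p q = 0 := by rw [hq, map_sub, hpp, sub_self]
  have hqp : ∀ b, ⟪p ξ, π b q⟫_ℂ = 0 := by
    intro b
    rw [hps, hpc, hpq, map_zero, inner_zero_right]
  have hqq : ∀ b, ⟪q, π b q⟫_ℂ = φ b - ⟪p ξ, π b ξ⟫_ℂ := by
    intro b
    have h1 : ⟪q, π b q⟫_ℂ = ⟪ξ, π b q⟫_ℂ - ⟪p ξ, π b q⟫_ℂ := by
      conv_lhs => rw [hq, inner_sub_left]
    rw [h1, hqp, sub_zero, hq, map_sub, inner_sub_right, hξ, hps, hpc]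
  have hvec : ∀ (η : H) (s : ℝ), 0 < s → ⟪η, η⟫_ℂ = (s : ℂ) →
      (fun b => ((s⁻¹ : ℝ) : ℂ) * ⟪η, π b η⟫_ℂ) ∈ csiStates I := by
    intro η s hs hη
    have hsc : (s : ℂ) ≠ 0 := by exact_mod_cast hs.ne'
    refine ⟨?_, ?_, ?_, ?_, ?_⟩
    · intro x y; simp [mul_add]
    · intro c x; simp; ring
    · intro x
      have h1 : ⟪η, π (star x * x) η⟫_ℂ = ((‖π x η‖ ^ 2 : ℝ) : ℂ) := by
        rw [← hmul, ← hadj, inner_self_eq_norm_sq_to_K]; simp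
      change 0 ≤ ((s⁻¹ : ℝ) : ℂ) * ⟪η, π (star x * x) η⟫_ℂ
      rw [h1, ← Complex.ofReal_mul]
      have : 0 ≤ s⁻¹ * ‖π x η‖ ^ 2 := by positivity
      exact_mod_cast this
    · change ((s⁻¹ : ℝ) : ℂ) * ⟪η, π 1 η⟫_ℂ = 1
      rw [map_one, ContinuousLinearMap.one_apply, hη, Complex.ofReal_inv, inv_mul_cancel₀ hsc]
    · intro i hi
      simp [hπI i hi]
  have hqt : ⟪q, q⟫_ℂ = ((1 - t : ℝ) : ℂ) := by
    have := hqq 1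
    rw [map_one, hφ.1.2.2.2.1] at this
    simpa [htξ] using this
  have hppt : ⟪p ξ, p ξ⟫_ℂ = (t : ℂ) := by rw [← hps, hpp, htξ]
  have ht0 : 0 ≤ t := by positivity
  have ht1 : 0 ≤ 1 - t := by
    have : ‖q‖ ^ 2 = 1 - t := by
      apply Complex.ofReal_injective
      rw [← hqt, inner_self_eq_norm_sq_to_K]; simp
    rw [← this]; positivity
  rcases ht0.eq_or_lt with h0 | h0
  · left
    have hpξ0 : p ξ = 0 := by
      rw [← h0] at hppt
      simpa using hppt
    have hp0 : p = 0 := hop _ _ fun b => by rw [hpc, hpξ0]; simp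
    rw [eq_bot_iff]
    intro x hx
    have : p x = x := Submodule.starProjection_eq_self_iff.2 hx
    rw [hp0] at this
    simpa using this.symm
  rcases ht1.eq_or_lt with h1 | h1
  · right
    have hq0 : q = 0 := by
      rw [← h1] at hqt
      simpa using hqt
    have hξp : p ξ = ξ := (sub_eq_zero.1 hq0).symm
    have hp1 : p = 1 := hop _ _ fun b => by rw [hpc, hξp]; rfl
    rw [eq_top_iff]
    intro x _
    refine Submodule.starProjection_eq_self_iff.1 ?_
    rw [← hp, hp1]; rfl
  exfalso
  have hst := hvec (p ξ) t h0 hppt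
  have hsq := hvec q (1 - t) h1 hqt
  have htc : (t : ℂ) ≠ 0 := by exact_mod_cast h0.ne'
  have htc' : ((1 - t : ℝ) : ℂ) ≠ 0 := by exact_mod_cast h1.ne'
  have heq := (mem_extremePoints.1 hφ).2 _ hst _ hsq ⟨t, 1 - t, h0, h1, by ring, by
    funext b
    simp only [Pi.add_apply, Pi.smul_apply, Complex.real_smul, hqq, hpξ, Complex.ofReal_inv]
    rw [mul_inv_cancel_left₀ htc, mul_inv_cancel_left₀ htc']
    ring⟩
  have hfin : ∀ b, ⟪p ξ - (t : ℂ) • ξ, π b ξ⟫_ℂ = 0 := by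
    intro b
    have h2 := congrFun heq.1 b
    simp only [hpξ, Complex.ofReal_inv] at h2
    rw [inner_sub_left, inner_smul_left, hξ, ← h2]
    simp [mul_inv_cancel_left₀ htc]
  have h3 : p ξ = (t : ℂ) • ξ := sub_eq_zero.1 (hz _ hfin)
  have h4 : (t : ℂ) * t = t := by
    have h5 := hppt
    rw [h3, inner_smul_left, inner_smul_right, hξ1] at h5
    simpa using h5
  have h5 : t * t = t := by exact_mod_cast h4
  nlinarith

/-- A closed ideal of `A` is a closed ideal of the unitization. -/
theorem csi_inr_ideal {A : Type u} [NonUnitalCStarAlgebra A] {I : Set A}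
    (hI : IsClosedTwoSidedIdeal I) :
    IsClosedTwoSidedIdeal ((Unitization.inr : A → Unitization ℂ A) '' I) := by
  refine ⟨?_, ⟨0, hI.2.1, Unitization.inr_zero ℂ⟩, ?_, ?_, ?_⟩
  · exact ((Unitization.isometry_inr (𝕜 := ℂ) (A := A)).isClosedEmbedding.isClosed_iff_image_isClosed).1 hI.1
  · rintro _ ⟨x, hx, rfl⟩ _ ⟨y, hy, rfl⟩
    exact ⟨x + y, hI.2.2.1 _ hx _ hy, Unitization.inr_add ℂ x y⟩
  · rintro _ ⟨x, hx, rfl⟩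
    exact ⟨-x, hI.2.2.2.1 _ hx, Unitization.inr_neg ℂ x⟩
  · rintro b _ ⟨x, hx, rfl⟩
    induction b using Unitization.ind with
    | inl_add_inr c y =>
      constructor
      · refine ⟨c • x + y * x, hI.2.2.1 _ (csi_smul_mem hI c hx) _ (hI.2.2.2.2 y x hx).1, ?_⟩
        simp [add_mul, Unitization.inl_mul_inr]
      · refine ⟨c • x + x * y, hI.2.2.1 _ (csi_smul_mem hI c hx) _ (hI.2.2.2.2 y x hx).2, ?_⟩
        simp [mul_add, Unitization.inr_mul_inl]

/-- A closed ideal is the intersection of the primitive ideals containing it. -/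
theorem csi_separate {A : Type u} [NonUnitalCStarAlgebra A] {I : Set A}
    (hI : IsClosedTwoSidedIdeal I) {a : A} (ha : a ∉ I) :
    ∃ P : Set A, IsPrimitiveIdeal A P ∧ I ⊆ P ∧ a ∉ P := by
  have ha' : (a : Unitization ℂ A) ∉ (Unitization.inr : A → Unitization ℂ A) '' I := by
    rintro ⟨x, hx, hxa⟩
    exact ha (Unitization.inr_injective hxa ▸ hx)
  obtain ⟨H, i1, i2, i3, π, hπI, hπa, hirr⟩ := csi_primitive (csi_inr_ideal hI) ha'
  let ρ : A →⋆ₙₐ[ℂ] (H →L[ℂ] H) :=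
    (π : Unitization ℂ A →⋆ₙₐ[ℂ] (H →L[ℂ] H)).comp (Unitization.inrNonUnitalStarAlgHom ℂ A)
  have hρ : ∀ x : A, ρ x = π (x : Unitization ℂ A) := fun _ => rfl
  refine ⟨{x : A | ρ x = 0}, ⟨PrimitiveWitness.mk H ρ ⟨a, hπa⟩ ?_ rfl⟩, ?_, ?_⟩
  · intro S hS hinv
    refine hirr S hS fun b x hx => ?_
    induction b using Unitization.ind with
    | inl_add_inr c y =>
      have h1 : (Unitization.inl c : Unitization ℂ A) = algebraMap ℂ _ c := rfl
      rw [map_add, h1, AlgHomClass.commutes, ContinuousLinearMap.add_apply, ← hρ,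
        Algebra.algebraMap_eq_smul_one]
      exact S.add_mem (S.smul_mem c hx) (hinv y x hx)
  · intro i hi
    exact hπI _ ⟨i, hi, rfl⟩
  · exact hπa

theorem csi_sum_ideal {A : Type u} [NonUnitalCStarAlgebra A] {I J : Set A}
    (hI : IsClosedTwoSidedIdeal I) (hJ : IsClosedTwoSidedIdeal J) :
    IsClosedTwoSidedIdeal (I + J) := by
  refine ⟨csi_sum_closed hI hJ, ⟨0, hI.2.1, 0, hJ.2.1, add_zero 0⟩, ?_, ?_, ?_⟩
  · rintro _ ⟨x, hx, y, hy, rfl⟩ _ ⟨x', hx', y', hy', rfl⟩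
    exact ⟨x + x', hI.2.2.1 _ hx _ hx', y + y', hJ.2.2.1 _ hy _ hy', add_add_add_comm _ _ _ _⟩
  · rintro _ ⟨x, hx, y, hy, rfl⟩
    exact ⟨-x, hI.2.2.2.1 _ hx, -y, hJ.2.2.2.1 _ hy, (neg_add x y).symm⟩
  · rintro a _ ⟨x, hx, y, hy, rfl⟩
    exact ⟨⟨a * x, (hI.2.2.2.2 a x hx).1, a * y, (hJ.2.2.2.2 a y hy).1, (mul_add a x y).symm⟩,
      ⟨x * a, (hI.2.2.2.2 a x hx).2, y * a, (hJ.2.2.2.2 a y hy).2, (add_mul x y a).symm⟩⟩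

/-- Suppose `I₁ ⊆ J₁` and `I₂ ⊆ J₂` are closed two-sided ideals of `A` such that the
locally closed subsets `U_{J₁} \ U_{I₁}` and `U_{J₂} \ U_{I₂}` of `Prim A` coincide,
where `U_I = {P ∈ Prim A : I ⊄ P}`.  Then `J₁ + J₂ = J₁ + I₂` and
`I₁ = (I₁ + I₂) ∩ J₁`; consequently the inclusion `J₁ ↪ J₁ + J₂` induces an isomorphism
`J₁/I₁ ≅ (J₁+J₂)/(I₁+I₂)` (concretely: the induced map is surjective with kernel `I₁`). -/
theorem subquotients_of_equal_locally_closed_subsets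
    {A : Type u} [NonUnitalCStarAlgebra A]
    (I₁ J₁ I₂ J₂ : Set A)
    (hI₁ : IsClosedTwoSidedIdeal I₁) (hJ₁ : IsClosedTwoSidedIdeal J₁)
    (hI₂ : IsClosedTwoSidedIdeal I₂) (hJ₂ : IsClosedTwoSidedIdeal J₂)
    (h₁ : I₁ ⊆ J₁) (h₂ : I₂ ⊆ J₂)
    (hPrim : ∀ P : Set A, IsPrimitiveIdeal A P →
      ((¬ J₁ ⊆ P ∧ I₁ ⊆ P) ↔ (¬ J₂ ⊆ P ∧ I₂ ⊆ P))) :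
    J₁ + J₂ = J₁ + I₂ ∧ I₁ = (I₁ + I₂) ∩ J₁ ∧
      (∀ x ∈ J₁ + J₂, ∃ y ∈ J₁, x - y ∈ I₁ + I₂) ∧
      (∀ y ∈ J₁, (y ∈ I₁ + I₂ ↔ y ∈ I₁)) := by
  have hsep := fun {I : Set A} (hI : IsClosedTwoSidedIdeal I) {a : A} (ha : a ∉ I) =>
    csi_separate hI ha
  have hJsub : J₂ ⊆ J₁ + I₂ := by
    intro x hx
    by_contra hx'
    obtain ⟨P, hP, hKP, hxP⟩ := hsep (csi_sum_ideal hJ₁ hI₂) hx'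
    have hJP : J₁ ⊆ P := fun y hy => hKP ⟨y, hy, 0, hI₂.2.1, add_zero y⟩
    have hIP : I₂ ⊆ P := fun y hy => hKP ⟨0, hJ₁.2.1, y, hy, zero_add y⟩
    exact ((hPrim P hP).2 ⟨fun h => hxP (h hx), hIP⟩).1 hJP
  have hker : ∀ y ∈ J₁, y ∈ I₁ + I₂ → y ∈ I₁ := by
    rintro y hy ⟨i, hi, j, hj, rfl⟩
    by_contra hn
    obtain ⟨P, hP, hIP, hyP⟩ := hsep hI₁ hn
    have h := (hPrim P hP).1 ⟨fun h => hyP (h hy), hIP⟩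
    obtain ⟨w⟩ := hP
    apply hyP
    have hi' := hIP hi
    have hj' := h.2 hj
    rw [w.ker_eq] at hi' hj' ⊢
    have hi'' : w.π i = 0 := hi'
    have hj'' : w.π j = 0 := hj'
    change w.π (i + j) = 0
    rw [map_add, hi'', hj'', add_zero]
  have hincl : ∀ y ∈ I₁, y ∈ I₁ + I₂ := fun y hy => ⟨y, hy, 0, hI₂.2.1, add_zero y⟩
  have hsum : ∀ x ∈ J₁ + J₂, ∃ y ∈ J₁, ∃ z ∈ I₂, y + z = x := by
    rintro x ⟨j, hj, k, hk, rfl⟩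
    obtain ⟨j', hj', i, hi, rfl⟩ := hJsub hk
    exact ⟨j + j', hJ₁.2.2.1 _ hj _ hj', i, hi, add_assoc _ _ _⟩
  refine ⟨Set.Subset.antisymm ?_ (Set.add_subset_add_left h₂), ?_, ?_, ?_⟩
  · intro x hx
    obtain ⟨y, hy, z, hz, rfl⟩ := hsum x hx
    exact ⟨y, hy, z, hz, rfl⟩
  · ext y
    exact ⟨fun hy => ⟨hincl y hy, h₁ hy⟩, fun hy => hker y hy.2 hy.1⟩
  · intro x hx
    obtain ⟨y, hy, z, hz, rfl⟩ := hsum x hx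
    exact ⟨y, hy, 0, hI₁.2.1, z, hz, by simp⟩
  · exact fun y hy => ⟨hker y hy, hincl y⟩
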